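/- arXiv:2307.05349 — 2 statements merged into one kernel-verified Lean document; each statement's English description precedes it below -/
import Mathlib

section
/- Let T > 0 and 0 < β < α < 1. If u : [0, T] → ℝ is differentiable with derivative u′ integrable on [0, T], then for every t ∈ (0, T]: D₀ₜ^{−α}(∂₀ₜ^β u)(t) = D₀ₜ^{−(α−β)} u(t) − ω_{1−β+α}(t) · u(0). -/
/-!
The identity is the semigroup law of the Riemann–Liouville kernels, `ω_a * ω_b = ω_{a+b}`, used
twice.  The law itself is the Beta integral `∫_x^t ω_a(t-η) ω_b(η-x) dη = ω_{a+b}(t-x)`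
(`integral_om_mul_om`); Tonelli–Fubini on the triangle `0 < ξ ≤ η ≤ t` lifts it to
`D^{-a} D^{-b} f = D^{-(a+b)} f` at every `t` where `ω_{a+b}(t-·) f` is integrable
(`integral_om_integral_om`).

With `f = u'`, the splittings `(a, b) = (α, 1-β)` and `(a, b) = (α-β, 1)` have the same sum
`1+α-β > 1`, for which the kernel is continuous, so that both double integrals equal
`∫_0^t ω_{1+α-β}(t-ξ) u'(ξ) dξ`.  The first is the left-hand side of the theorem.  In the second
`ω_1 = 1`, so the inner integral is `u(s) - u(0)` by the fundamental theorem of calculus, and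
`∫_0^t ω_{α-β}(t-s) ds = ω_{1+α-β}(t)` gives the right-hand side.
-/

open MeasureTheory Set

/-- The kernel `ω_ν(t) = t^{ν-1} / Γ(ν)`. -/
noncomputable def om (ν t : ℝ) : ℝ := t ^ (ν - 1) / Real.Gamma ν

theorem measurable_om (ν : ℝ) : Measurable (om ν) := by
  unfold om; fun_prop

theorem om_nonneg {ν x : ℝ} (hν : 0 < ν) (hx : 0 ≤ x) : 0 ≤ om ν x :=
  div_nonneg (Real.rpow_nonneg hx _) (Real.Gamma_pos_of_pos hν).le

theorem om_pos {ν x : ℝ} (hν : 0 < ν) (hx : 0 < x) : 0 < om ν x :=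
  div_pos (Real.rpow_pos_of_pos hx _) (Real.Gamma_pos_of_pos hν)

theorem om_one (x : ℝ) : om 1 x = 1 := by
  simp [om]

/-- The Beta integral, transferred from its complex version in Mathlib. -/
theorem integral_rpow_mul_rpow {a b c : ℝ} (ha : 0 < a) (hb : 0 < b) (hc : 0 < c) :
    ∫ x in (0:ℝ)..c, x ^ (b - 1) * (c - x) ^ (a - 1)
      = c ^ (a + b - 1) * (Real.Gamma a * Real.Gamma b / Real.Gamma (a + b)) := by
  have h := Complex.betaIntegral_scaled (b : ℂ) (a : ℂ) hc
  rw [Complex.betaIntegral_eq_Gamma_mul_div _ _ (by simpa using hb) (by simpa using ha)] at h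
  have e : ∫ x in (0:ℝ)..c, (x : ℂ) ^ ((b : ℂ) - 1) * ((c : ℂ) - x) ^ ((a : ℂ) - 1)
      = ∫ x in (0:ℝ)..c, ((x ^ (b - 1) * (c - x) ^ (a - 1) : ℝ) : ℂ) := by
    refine intervalIntegral.integral_congr fun x hx => ?_
    rw [uIcc_of_le hc.le] at hx
    simp only [Complex.ofReal_mul]
    rw [Complex.ofReal_cpow hx.1, Complex.ofReal_cpow (sub_nonneg.2 hx.2)]
    push_cast
    rfl
  rw [e, intervalIntegral.integral_ofReal, ← Complex.ofReal_add, Complex.Gamma_ofReal,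
    Complex.Gamma_ofReal, Complex.Gamma_ofReal, ← Complex.ofReal_one, ← Complex.ofReal_sub,
    ← Complex.ofReal_cpow hc.le] at h
  rw [add_comm a b, mul_comm (Real.Gamma a)]
  exact_mod_cast h

/-- The semigroup law `ω_a * ω_b = ω_{a+b}` of the kernels. -/
theorem integral_om_mul_om {a b x t : ℝ} (ha : 0 < a) (hb : 0 < b) (hx : x < t) :
    ∫ η in x..t, om a (t - η) * om b (η - x) = om (a + b) (t - x) := by
  have h := intervalIntegral.integral_comp_sub_right (a := x) (b := t)
    (fun y => y ^ (b - 1) * ((t - x) - y) ^ (a - 1)) x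
  rw [sub_self, integral_rpow_mul_rpow ha hb (sub_pos.2 hx)] at h
  have e : ∀ η, om a (t - η) * om b (η - x) = (Real.Gamma a * Real.Gamma b)⁻¹ *
      ((η - x) ^ (b - 1) * ((t - x) - (η - x)) ^ (a - 1)) := by
    intro η
    rw [sub_sub_sub_cancel_right]
    unfold om
    ring
  simp_rw [e]
  rw [intervalIntegral.integral_const_mul, h, om]
  have := (Real.Gamma_pos_of_pos ha).ne'
  have := (Real.Gamma_pos_of_pos hb).ne'
  field_simp

theorem integrableOn_om_mul_om {a b x t : ℝ} (ha : 0 < a) (hb : 0 < b) (hx : x < t) :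
    IntegrableOn (fun η => om a (t - η) * om b (η - x)) (Icc x t) := by
  -- A non-integrable function has integral `0`, whereas this integral is positive.
  rw [integrableOn_Icc_iff_integrableOn_Ioc]
  refine Integrable.of_integral_ne_zero ?_
  rw [← intervalIntegral.integral_of_le hx.le, integral_om_mul_om ha hb hx]
  exact (om_pos (add_pos ha hb) (sub_pos.2 hx)).ne'

/-- Composition of fractional integrals, `D^{-a} D^{-b} f = D^{-(a+b)} f`, at a point `t` where
the right-hand side converges absolutely. -/
theorem integral_om_integral_om {a b t : ℝ} (ha : 0 < a) (hb : 0 < b) (ht : 0 < t) {f : ℝ → ℝ}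
    (hf : AEStronglyMeasurable f (volume.restrict (Ioc 0 t)))
    (hint : IntegrableOn (fun ξ => om (a + b) (t - ξ) * f ξ) (Ioc 0 t)) :
    ∫ η in (0:ℝ)..t, om a (t - η) * ∫ ξ in (0:ℝ)..η, om b (η - ξ) * f ξ
      = ∫ ξ in (0:ℝ)..t, om (a + b) (t - ξ) * f ξ := by
  set μ : Measure ℝ := volume.restrict (Ioc 0 t) with hμ
  let k : ℝ → ℝ → ℝ := fun η ξ => {p : ℝ × ℝ | p.2 ≤ p.1}.indicator
    (fun p => om a (t - p.1) * om b (p.1 - p.2)) (η, ξ)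
  have hk : ∀ ξ, (fun η => k η ξ) = (Ici ξ).indicator
      (fun η => om a (t - η) * om b (η - ξ)) := by
    intro ξ; ext η; simp [k, indicator]
  have hset : ∀ ξ, 0 < ξ → Ioc 0 t ∩ Ici ξ = Icc ξ t := by
    intro ξ hξ; ext η; simp only [mem_inter_iff, mem_Ioc, mem_Ici, mem_Icc]
    constructor
    · rintro ⟨⟨_, h⟩, h'⟩; exact ⟨h', h⟩
    · rintro ⟨h, h'⟩; exact ⟨⟨hξ.trans_le h, h'⟩, h⟩
  have hk_nonneg : ∀ η ≤ t, ∀ ξ, 0 ≤ k η ξ := by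
    intro η hη ξ
    refine indicator_apply_nonneg fun h => ?_
    exact mul_nonneg (om_nonneg ha (sub_nonneg.2 hη)) (om_nonneg hb (sub_nonneg.2 h))
  have hk_int : ∀ ξ, 0 < ξ → ξ < t → Integrable (fun η => k η ξ) μ := by
    intro ξ h0 h1
    rw [hk, integrable_indicator_iff measurableSet_Ici, IntegrableOn, hμ,
      Measure.restrict_restrict measurableSet_Ici, inter_comm, hset ξ h0]
    exact integrableOn_om_mul_om ha hb h1
  have hk_val : ∀ ξ, 0 < ξ → ξ < t → ∫ η, k η ξ ∂μ = om (a + b) (t - ξ) := by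
    intro ξ h0 h1
    rw [hk, integral_indicator measurableSet_Ici, hμ,
      Measure.restrict_restrict measurableSet_Ici, inter_comm, hset ξ h0,
      integral_Icc_eq_integral_Ioc, ← intervalIntegral.integral_of_le h1.le,
      integral_om_mul_om ha hb h1]
  -- The endpoint `ξ = t`, where the Beta integral degenerates, is negligible.
  have hae : ∀ᵐ ξ ∂μ, 0 < ξ ∧ ξ < t := by
    have h1 : ∀ᵐ ξ ∂μ, ξ ≠ t := ae_restrict_of_ae (by simp [ae_iff])
    filter_upwards [ae_restrict_mem measurableSet_Ioc, h1] with ξ h h'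
    exact ⟨h.1, lt_of_le_of_ne h.2 h'⟩
  have hmem : ∀ᵐ η ∂μ, η ∈ Ioc 0 t := ae_restrict_mem measurableSet_Ioc
  have hk_meas : Measurable (Function.uncurry k) := by
    have h1 := measurable_om a
    have h2 := measurable_om b
    refine Measurable.indicator (by fun_prop) ?_
    exact measurableSet_le measurable_snd measurable_fst
  have hF : Integrable (Function.uncurry fun η ξ => k η ξ * f ξ) (μ.prod μ) := by
    have hm : AEStronglyMeasurable (Function.uncurry fun η ξ => k η ξ * f ξ) (μ.prod μ) :=
      hk_meas.aestronglyMeasurable.mul hf.comp_snd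
    rw [integrable_prod_iff' hm]
    constructor
    · filter_upwards [hae] with ξ hξ
      exact (hk_int ξ hξ.1 hξ.2).mul_const (f ξ)
    · refine hint.norm.congr ?_
      filter_upwards [hae] with ξ hξ
      have e : ∫ η, ‖k η ξ * f ξ‖ ∂μ = ∫ η, k η ξ * ‖f ξ‖ ∂μ := by
        refine integral_congr_ae ?_
        filter_upwards [hmem] with η hη
        rw [norm_mul, Real.norm_of_nonneg (hk_nonneg η hη.2 ξ)]
      simp only [Function.uncurry]
      rw [e, integral_mul_const, hk_val ξ hξ.1 hξ.2, norm_mul,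
        Real.norm_of_nonneg (om_nonneg (add_pos ha hb) (sub_nonneg.2 hξ.2.le))]
  rw [intervalIntegral.integral_of_le ht.le, intervalIntegral.integral_of_le ht.le]
  calc ∫ η, om a (t - η) * (∫ ξ in (0:ℝ)..η, om b (η - ξ) * f ξ) ∂μ
      = ∫ η, ∫ ξ, k η ξ * f ξ ∂μ ∂μ := by
        refine integral_congr_ae ?_
        filter_upwards [hmem] with η hη
        have e : (fun ξ => k η ξ * f ξ) = (Iic η).indicator
            (fun ξ => om a (t - η) * (om b (η - ξ) * f ξ)) := by
          ext ξ
          simp only [k, indicator, mem_ofPred_eq, mem_Iic]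
          split_ifs <;> ring
        rw [e, integral_indicator measurableSet_Iic, hμ,
          Measure.restrict_restrict measurableSet_Iic, inter_comm, Ioc_inter_Iic,
          min_eq_right hη.2, integral_const_mul, intervalIntegral.integral_of_le hη.1.le]
    _ = ∫ ξ, ∫ η, k η ξ * f ξ ∂μ ∂μ := integral_integral_swap hF
    _ = ∫ ξ, om (a + b) (t - ξ) * f ξ ∂μ := by
        refine integral_congr_ae ?_
        filter_upwards [hae] with ξ hξ
        rw [integral_mul_const, hk_val ξ hξ.1 hξ.2]

/-- For `0 < β < α < 1`:
`D₀ₜ^{-α}(∂₀ₜ^β u)(t) = D₀ₜ^{-(α-β)} u(t) − ω_{1-β+α}(t) u(0)`. -/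
theorem stmt_6 (T α β : ℝ) (hT : 0 < T) (hβ0 : 0 < β) (hβα : β < α) (hα1 : α < 1)
    (u u' : ℝ → ℝ)
    (hu : ∀ t ∈ Icc (0:ℝ) T, HasDerivAt u (u' t) t)
    (hu'int : IntegrableOn u' (Icc 0 T))
    (t : ℝ) (ht : t ∈ Ioc (0:ℝ) T) :
    ∫ η in (0:ℝ)..t, om α (t - η) * ∫ ξ in (0:ℝ)..η, om (1 - β) (η - ξ) * u' ξ
      = (∫ s in (0:ℝ)..t, om (α - β) (t - s) * u s) - om (1 - β + α) t * u 0 := by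
  obtain ⟨ht0, htT⟩ := ht
  have hγ : 0 < α - β := sub_pos.2 hβα
  have hf : IntegrableOn u' (Icc 0 t) := hu'int.mono_set (Icc_subset_Icc_right htT)
  have hcont : Continuous fun ξ => om (α - β + 1) (t - ξ) := by
    have h : 0 ≤ α - β + 1 - 1 := by linarith
    unfold om
    exact ((continuous_const.sub continuous_id).rpow_const fun _ => Or.inr h).div_const _
  have hint : IntegrableOn (fun ξ => om (α - β + 1) (t - ξ) * u' ξ) (Ioc 0 t) :=
    (hf.continuousOn_mul hcont.continuousOn isCompact_Icc).mono_set Ioc_subset_Icc_self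
  have hmeas := (hf.mono_set Ioc_subset_Icc_self).aestronglyMeasurable
  have e : α + (1 - β) = α - β + 1 := by ring
  rw [integral_om_integral_om (by linarith) (by linarith) ht0 hmeas (by rwa [e]), e,
    ← integral_om_integral_om hγ one_pos ht0 hmeas hint]
  have hker : IntervalIntegrable (fun s => om (α - β) (t - s)) volume 0 t := by
    rw [intervalIntegrable_iff_integrableOn_Icc_of_le ht0.le]
    simpa only [om_one, mul_one] using integrableOn_om_mul_om hγ one_pos ht0
  have hkerval : ∫ s in (0:ℝ)..t, om (α - β) (t - s) = om (1 - β + α) t := by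
    have h := integral_om_mul_om hγ one_pos ht0
    simp only [om_one, mul_one, sub_zero] at h
    rw [h]
    congr 1
    ring
  have hucont : ContinuousOn u (uIcc 0 t) := by
    rw [uIcc_of_le ht0.le]
    exact fun s hs => (hu s ⟨hs.1, hs.2.trans htT⟩).continuousAt.continuousWithinAt
  rw [← hkerval, ← intervalIntegral.integral_mul_const,
    ← intervalIntegral.integral_sub (hker.mul_continuousOn hucont) (hker.mul_const _)]
  refine intervalIntegral.integral_congr fun s hs => ?_
  rw [uIcc_of_le ht0.le] at hs
  have hftc : ∫ ξ in (0:ℝ)..s, u' ξ = u s - u 0 := by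
    refine intervalIntegral.integral_eq_sub_of_hasDerivAt (fun ξ hξ => ?_) ?_
    · rw [uIcc_of_le hs.1] at hξ
      exact hu ξ ⟨hξ.1, hξ.2.trans (hs.2.trans htT)⟩
    · rw [intervalIntegrable_iff_integrableOn_Icc_of_le hs.1]
      exact hf.mono_set (Icc_subset_Icc_right hs.2)
  simp only [om_one, one_mul]
  rw [hftc, mul_sub]
end

section
/- Let H be a real Hilbert space, T > 0, 0 < γ < 1, 0 < δ < 1, 0 < α < 1, κ₁, κ₂, κ₃ ≥ 0, and κ_A > 0. Let A : H → H be a linear map that is symmetric and satisfies ⟨A x, x⟩ ≥ κ_A ‖x‖² for all x. Let u : [0, T] → H be continuously differentiable, f : [0, T] → H continuous, and suppose that for all t ∈ (0, T]: u′(t) + κ₁ ∫₀ᵗ ω_{1−γ}(t − s) u′(s) ds + κ₂ u(t) + κ₃ ∫₀ᵗ ω_δ(t − s) u(s) ds + ∫₀ᵗ ω_α(t − s) A(u(s)) ds = f(t). Then for every t ∈ [0, T]: ∫₀ᵗ ‖u(s)‖² ds ≤ 2 ( T + κ₁ T^{2−γ}/Γ(3 − γ) ) ‖u(0)‖² + 4T²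 ∫₀ᵗ ‖f(s)‖² ds. -/
open MeasureTheory Set
open scoped RealInnerProductSpace

/-!
Pairing the equation with `u` and integrating over `[0, τ]` gives
`½‖u(τ)‖² ≤ ½‖u(0)‖² + ½ κ₁ ω_{2-γ}(τ) ‖u(0)‖² + ∫₀^τ ‖f‖ ‖u‖` (`energy_le`). A second
integration in time and Young's inequality give the claim (`integral_norm_sq_le`).

The energy inequality needs two facts about the kernels `ω_ν` with `0 < ν < 1`: the convolution
quadratic forms `∫ ⟪ω_δ * u, u⟫` and `∫ ⟪ω_α * A u, u⟫` are nonnegative, and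
`∫ ⟪ω_{1-γ} * u', u⟫ ≥ -½ ‖u(0)‖² ∫ ω_{1-γ}`. Since `ω_ν(τ)` is a positive multiple of
`∫₀^∞ x^{-ν} e^{-xτ} dx`, both follow from the same inequalities for the kernels `e^{-xτ}`,
`x > 0` (`om_lower`); these kernels are regular, and the convolution `W` with one of them solves
the equation `W' = v - x W`, so the inequalities reduce to monotonicity of explicit energies
(`expConv_pos`, `expConv_deriv_lower`).

The operator `A` is bounded, being symmetric and defined on all of `H` (Hellinger–Toeplitz).
-/

/-! ### The kernel `ω_ν` as a mixture of exponentials -/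

/-- The Laplace representation of `ω_ν` for `0 < ν < 1`. -/
theorem laplace_om {ν : ℝ} (hν0 : 0 < ν) (hν1 : ν < 1) {τ : ℝ} (hτ : 0 < τ) :
    ∫ x in Ioi (0:ℝ), x ^ (-ν) * Real.exp (-(τ * x))
      = (Real.Gamma ν * Real.Gamma (1 - ν)) * om ν τ := by
  have h := Real.integral_rpow_mul_exp_neg_mul_Ioi (a := 1 - ν) (r := τ) (by linarith) hτ
  rw [show (1 - ν - 1) = -ν by ring] at h
  have hG := (Real.Gamma_pos_of_pos hν0).ne'
  rw [h, om, one_div, Real.inv_rpow hτ.le, ← Real.rpow_neg hτ.le,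
    show -(1 - ν) = ν - 1 by ring]
  field_simp

theorem intervalIntegrable_om {ν : ℝ} (hν0 : 0 < ν) (a b : ℝ) :
    IntervalIntegrable (om ν) volume a b := by
  have := (intervalIntegral.intervalIntegrable_rpow' (a := a) (b := b)
    (r := ν - 1) (by linarith)).div_const (Real.Gamma ν)
  exact this

theorem integral_om {ν : ℝ} (hν0 : 0 < ν) {t : ℝ} :
    ∫ s in (0:ℝ)..t, om ν s = t ^ ν / Real.Gamma (ν + 1) := by
  simp only [om]
  rw [intervalIntegral.integral_div, integral_rpow (Or.inl (by linarith)),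
    Real.Gamma_add_one hν0.ne', sub_add_cancel, Real.zero_rpow hν0.ne', sub_zero, div_div]

/-- A function whose Laplace-type moments `∫ e^{-xτ} G(τ)` over `[0, t]` are all nonnegative has
nonnegative integral against `ω_ν`, as `ω_ν` is a positive mixture of decaying exponentials. -/
theorem integral_om_mul_nonneg {ν : ℝ} (hν0 : 0 < ν) (hν1 : ν < 1) {t : ℝ} (ht : 0 ≤ t)
    {G : ℝ → ℝ} (hG : Continuous G)
    (h : ∀ x > 0, 0 ≤ ∫ τ in (0:ℝ)..t, Real.exp (-(x * τ)) * G τ) :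
    0 ≤ ∫ τ in (0:ℝ)..t, om ν τ * G τ := by
  set c := Real.Gamma ν * Real.Gamma (1 - ν) with hc
  have hc0 : 0 < c := mul_pos (Real.Gamma_pos_of_pos hν0) (Real.Gamma_pos_of_pos (by linarith))
  let F : ℝ × ℝ → ℝ := fun p => (p.2 ^ (-ν) * Real.exp (-(p.1 * p.2))) * G p.1
  have hom : ∀ τ ∈ Ioc (0:ℝ) t, 0 < om ν τ := fun τ hτ =>
    div_pos (Real.rpow_pos_of_pos hτ.1 _) (Real.Gamma_pos_of_pos hν0)
  have hmeas : Measurable F := by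
    have := hG.measurable
    fun_prop
  have hint : Integrable F ((volume.restrict (Ioc 0 t)).prod (volume.restrict (Ioi 0))) := by
    rw [integrable_prod_iff hmeas.aestronglyMeasurable]
    constructor
    · filter_upwards [ae_restrict_mem measurableSet_Ioc] with τ hτ
      refine Integrable.mul_const (f := fun x => x ^ (-ν) * Real.exp (-(τ * x))) ?_ (G τ)
      -- The Bochner integral of a non-integrable function is `0`, and this one is positive.
      apply Integrable.of_integral_ne_zero
      rw [laplace_om hν0 hν1 hτ.1]
      exact (mul_pos hc0 (hom τ hτ)).ne'
    · have h1 : IntervalIntegrable (fun τ => c * (om ν τ * |G τ|)) volume 0 t :=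
        ((intervalIntegrable_om hν0 0 t).mul_continuousOn hG.abs.continuousOn).const_mul c
      rw [intervalIntegrable_iff_integrableOn_Ioc_of_le ht] at h1
      refine h1.congr ?_
      filter_upwards [ae_restrict_mem measurableSet_Ioc] with τ hτ
      rw [← mul_assoc, ← laplace_om hν0 hν1 hτ.1, ← integral_mul_const]
      refine setIntegral_congr_fun measurableSet_Ioi fun x hx => ?_
      have : 0 ≤ x ^ (-ν) := Real.rpow_nonneg (le_of_lt hx) _
      simp [F, abs_of_nonneg this]
  have hswap := integral_integral_swap (f := fun τ x => F (τ, x)) hint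
  have hL : ∫ τ in Ioc 0 t, ∫ x in Ioi 0, F (τ, x) = c * ∫ τ in (0:ℝ)..t, om ν τ * G τ := by
    rw [intervalIntegral.integral_of_le ht, ← integral_const_mul]
    refine setIntegral_congr_fun measurableSet_Ioc fun τ hτ => ?_
    simp only [F]
    rw [integral_mul_const, laplace_om hν0 hν1 hτ.1, mul_assoc]
  have hR : 0 ≤ ∫ x in Ioi 0, ∫ τ in Ioc 0 t, F (τ, x) := by
    refine setIntegral_nonneg measurableSet_Ioi fun x hx => ?_
    have h2 := h x hx
    rw [intervalIntegral.integral_of_le ht] at h2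
    simp only [F, mul_assoc]
    rw [integral_const_mul]
    refine mul_nonneg (Real.rpow_nonneg (le_of_lt hx) _) ?_
    simpa only [mul_comm x] using h2
  rw [← hswap, hL] at hR
  exact nonneg_of_mul_nonneg_right hR hc0

/-! ### Convolution forms -/

/-- Fubini on the triangle `0 < τ ≤ s ≤ t` for an integrable kernel in the variable `τ`. -/
theorem triangle_swap {t : ℝ} (ht : 0 ≤ t) {k : ℝ → ℝ} (hk : IntervalIntegrable k volume 0 t)
    {Q : ℝ → ℝ → ℝ} (hQ : Continuous fun p : ℝ × ℝ => Q p.1 p.2) :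
    IntervalIntegrable (fun s => ∫ τ in (0:ℝ)..s, k τ * Q s τ) volume 0 t ∧
    ∫ s in (0:ℝ)..t, ∫ τ in (0:ℝ)..s, k τ * Q s τ
      = ∫ τ in (0:ℝ)..t, k τ * ∫ s in τ..t, Q s τ := by
  let S : Set (ℝ × ℝ) := {p | p.2 ≤ p.1}
  have hS : MeasurableSet S := measurableSet_le measurable_snd measurable_fst
  let F : ℝ × ℝ → ℝ := S.indicator fun p => k p.2 * Q p.1 p.2
  have hk' : Integrable k (volume.restrict (Ioc 0 t)) :=
    (intervalIntegrable_iff_integrableOn_Ioc_of_le ht).1 hk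
  obtain ⟨C, hC⟩ := (isCompact_Icc.prod isCompact_Icc :
    IsCompact (Icc (0:ℝ) t ×ˢ Icc (0:ℝ) t)).exists_bound_of_continuousOn hQ.continuousOn
  have hint : Integrable F ((volume.restrict (Ioc 0 t)).prod (volume.restrict (Ioc 0 t))) := by
    refine Integrable.indicator ?_ hS
    refine Integrable.mul_bdd (c := C) (hk'.comp_snd _) hQ.aestronglyMeasurable ?_
    rw [Measure.prod_restrict]
    filter_upwards [ae_restrict_mem (measurableSet_Ioc.prod measurableSet_Ioc)] with p hp
    exact hC p ⟨Ioc_subset_Icc_self hp.1, Ioc_subset_Icc_self hp.2⟩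
  have h1 : ∀ s ∈ Ioc 0 t, ∫ τ in Ioc 0 t, F (s, τ) = ∫ τ in (0:ℝ)..s, k τ * Q s τ := by
    intro s hs
    rw [← intervalIntegral.integral_indicator (Ioc_subset_Icc_self hs),
      intervalIntegral.integral_of_le ht]
    rfl
  have h2 : ∀ τ ∈ Ioc 0 t, ∫ s in Ioc 0 t, F (s, τ) = k τ * ∫ s in τ..t, Q s τ := by
    intro τ hτ
    have : (fun s => F (s, τ)) = (Ici τ).indicator fun s => k τ * Q s τ := rfl
    have hset : Ioc 0 t ∩ Ici τ = Icc τ t := by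
      ext s
      simp only [mem_inter_iff, mem_Ioc, mem_Ici, mem_Icc]
      exact ⟨fun h => ⟨h.2, h.1.2⟩, fun h => ⟨⟨hτ.1.trans_le h.1, h.2⟩, h.1⟩⟩
    rw [this, setIntegral_indicator measurableSet_Ici, hset, integral_Icc_eq_integral_Ioc,
      integral_const_mul, intervalIntegral.integral_of_le hτ.2]
  constructor
  · rw [intervalIntegrable_iff_integrableOn_Ioc_of_le ht]
    refine hint.integral_prod_left.congr ?_
    filter_upwards [ae_restrict_mem measurableSet_Ioc] with s hs using h1 s hs
  · have hswap := integral_integral_swap (f := fun s τ => F (s, τ)) hint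
    rw [intervalIntegral.integral_of_le ht, intervalIntegral.integral_of_le ht,
      ← setIntegral_congr_fun measurableSet_Ioc h1, ← setIntegral_congr_fun measurableSet_Ioc h2,
      hswap]

section Hilbert

variable {H : Type*} [NormedAddCommGroup H] [InnerProductSpace ℝ H]

/-- The convolution form `∫ ⟪k * a, b⟫` depends linearly on the kernel: it is the integral of `k`
against a function that does not involve `k`. -/
theorem conv_inner [CompleteSpace H] {t : ℝ} (ht : 0 ≤ t) {k : ℝ → ℝ} (hk : IntervalIntegrable k volume 0 t)
    {a b : ℝ → H} (ha : Continuous a) (hb : Continuous b) :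
    IntervalIntegrable (fun s => ⟪∫ r in (0:ℝ)..s, k (s - r) • a r, b s⟫) volume 0 t ∧
    ∫ s in (0:ℝ)..t, ⟪∫ r in (0:ℝ)..s, k (s - r) • a r, b s⟫
      = ∫ τ in (0:ℝ)..t, k τ * ∫ s in τ..t, ⟪a (s - τ), b s⟫ := by
  have hQ : Continuous fun p : ℝ × ℝ => (fun s τ => ⟪a (s - τ), b s⟫) p.1 p.2 := by fun_prop
  have key : ∀ s ∈ Icc 0 t, ⟪∫ r in (0:ℝ)..s, k (s - r) • a r, b s⟫
      = ∫ τ in (0:ℝ)..s, k τ * ⟪a (s - τ), b s⟫ := by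
    intro s hs
    have hks : IntervalIntegrable k volume 0 s :=
      hk.mono_set (by rw [uIcc_of_le hs.1, uIcc_of_le ht]; exact Icc_subset_Icc_right hs.2)
    have hks' : IntervalIntegrable (fun r => k (s - r) • a r) volume 0 s := by
      have := (hks.comp_sub_left s).symm
      simp only [sub_zero, sub_self] at this
      exact this.smul_continuousOn ha.continuousOn
    have h1 := intervalIntegral.integral_comp_sub_left (a := 0) (b := s)
      (fun τ => k τ * ⟪a (s - τ), b s⟫) s
    simp only [sub_zero, sub_self, sub_sub_cancel] at h1
    rw [← h1, real_inner_comm]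
    have h2 := (innerSL ℝ (b s)).intervalIntegral_comp_comm hks'
    simp only [innerSL_apply_apply] at h2
    rw [← h2]
    refine intervalIntegral.integral_congr fun r _ => ?_
    simp only [inner_smul_right, real_inner_comm]
  obtain ⟨h1, h2⟩ := triangle_swap (Q := fun s τ => ⟪a (s - τ), b s⟫) ht hk hQ
  constructor
  · refine h1.congr fun s hs => ?_
    rw [uIoc_of_le ht] at hs
    exact (key s (Ioc_subset_Icc_self hs)).symm
  · rw [← h2]
    refine intervalIntegral.integral_congr fun s hs => ?_
    rw [uIcc_of_le ht] at hs
    exact key s hs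

/-- The convolution of `v` with the kernel `e^{-x·}`; it solves `W' = v - x W`, `W(0) = 0`. -/
noncomputable def expConv (x : ℝ) (v : ℝ → H) (s : ℝ) : H :=
  Real.exp (-(x * s)) • ∫ r in (0:ℝ)..s, Real.exp (x * r) • v r

theorem expConv_eq (x : ℝ) (v : ℝ → H) (s : ℝ) :
    expConv x v s = ∫ r in (0:ℝ)..s, Real.exp (-(x * (s - r))) • v r := by
  rw [expConv, ← intervalIntegral.integral_smul]
  refine intervalIntegral.integral_congr fun r _ => ?_
  simp only [smul_smul, ← Real.exp_add]
  ring_nf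

theorem expConv_zero (x : ℝ) (v : ℝ → H) : expConv x v 0 = 0 := by simp [expConv]

variable [CompleteSpace H]

theorem hasDerivAt_expConv (x : ℝ) {v : ℝ → H} (hv : Continuous v) (s : ℝ) :
    HasDerivAt (expConv x v) (v s - x • expConv x v s) s := by
  have hc : Continuous fun r => Real.exp (x * r) • v r := by fun_prop
  have h1 := hc.integral_hasStrictDerivAt 0 s |>.hasDerivAt
  have h2 : HasDerivAt (fun s => Real.exp (-(x * s))) (Real.exp (-(x * s)) * -x) s := by
    simpa using ((hasDerivAt_id s).const_mul x).neg.exp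
  refine (h2.smul h1).congr_deriv ?_
  rw [expConv, smul_smul, smul_smul, ← Real.exp_add]
  simp only [neg_add_cancel, Real.exp_zero, one_smul]
  rw [sub_eq_add_neg, ← neg_smul]
  congr 2
  ring

theorem continuous_expConv (x : ℝ) {v : ℝ → H} (hv : Continuous v) : Continuous (expConv x v) :=
  continuous_iff_continuousAt.2 fun s => (hasDerivAt_expConv x hv s).continuousAt

/-- A lower bound that holds, with the same constant `C`, for all exponential kernels passes
to the kernel `ω_ν`. -/
theorem om_lower {ν : ℝ} (hν0 : 0 < ν) (hν1 : ν < 1) {t : ℝ} (ht : 0 ≤ t) {a b : ℝ → H}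
    (ha : Continuous a) (hb : Continuous b) {C : ℝ}
    (h : ∀ x > 0, 0 ≤ (∫ s in (0:ℝ)..t, ⟪expConv x a s, b s⟫)
      + C * ∫ s in (0:ℝ)..t, Real.exp (-(x * s))) :
    0 ≤ (∫ s in (0:ℝ)..t, ⟪∫ r in (0:ℝ)..s, om ν (s - r) • a r, b s⟫)
      + C * ∫ s in (0:ℝ)..t, om ν s := by
  have hI : Continuous fun τ => (∫ s in τ..t, ⟪a (s - τ), b s⟫) := by
    simp_rw [intervalIntegral.integral_symm t]
    refine (intervalIntegral.continuous_parametric_intervalIntegral_of_continuous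
      (f := fun τ s => ⟪a (s - τ), b s⟫) ?_ continuous_id).neg
    simp only [Function.uncurry_def]
    fun_prop
  have hG : Continuous fun τ => (∫ s in τ..t, ⟪a (s - τ), b s⟫) + C := hI.add continuous_const
  have key : ∀ k : ℝ → ℝ, IntervalIntegrable k volume 0 t →
      ∫ τ in (0:ℝ)..t, k τ * ((∫ s in τ..t, ⟪a (s - τ), b s⟫) + C)
      = (∫ s in (0:ℝ)..t, ⟪∫ r in (0:ℝ)..s, k (s - r) • a r, b s⟫)
        + C * ∫ s in (0:ℝ)..t, k s := by
    intro k hk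
    rw [(conv_inner ht hk ha hb).2, ← intervalIntegral.integral_const_mul,
      ← intervalIntegral.integral_add (hk.mul_continuousOn hI.continuousOn) (hk.const_mul C)]
    refine intervalIntegral.integral_congr fun τ _ => ?_
    ring
  rw [← key _ (intervalIntegrable_om hν0 0 t)]
  refine integral_om_mul_nonneg hν0 hν1 ht hG fun x hx => ?_
  have hk : Continuous fun τ => Real.exp (-(x * τ)) := by fun_prop
  rw [key _ (hk.intervalIntegrable 0 t)]
  simpa only [expConv_eq] using h x hx

/-! ### Energy estimates for exponential kernels -/

theorem le_of_hasDerivAt_nonneg {F F' : ℝ → ℝ} (hF : ∀ s, HasDerivAt F (F' s) s)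
    (h : ∀ s, 0 ≤ s → 0 ≤ F' s) {t : ℝ} (ht : 0 ≤ t) : F 0 ≤ F t := by
  refine monotoneOn_of_deriv_nonneg (convex_Ici 0)
    (fun s _ => (hF s).continuousAt.continuousWithinAt)
    (fun s _ => (hF s).differentiableAt.differentiableWithinAt) ?_
    self_mem_Ici (mem_Ici.2 ht) ht
  intro s hs
  rw [interior_Ici] at hs
  rw [(hF s).deriv]
  exact h s (le_of_lt hs)

/-- Positivity of the exponential kernel: twice the integral dominates `⟪B W, W⟫` at the final
time, where `W = expConv x v`. -/
theorem expConv_pos (B : H →L[ℝ] H) (hsym : ∀ x y : H, ⟪B x, y⟫ = ⟪x, B y⟫)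
    (hB : ∀ x : H, 0 ≤ ⟪B x, x⟫) {v : ℝ → H} (hv : Continuous v) {x : ℝ} (hx : 0 < x)
    {t : ℝ} (ht : 0 ≤ t) : 0 ≤ ∫ s in (0:ℝ)..t, ⟪expConv x (fun r => B (v r)) s, v s⟫ := by
  set w := expConv x v with hw
  have hBw : ∀ s, expConv x (fun r => B (v r)) s = B (w s) := by
    intro s
    have hc : Continuous fun r => Real.exp (x * r) • v r := by fun_prop
    rw [hw, expConv, expConv, map_smul, ← B.intervalIntegral_comp_comm (hc.intervalIntegrable _ _)]
    simp only [map_smul]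
  simp only [hBw]
  have hwc : Continuous w := continuous_expConv x hv
  have hc : Continuous fun s => ⟪B (w s), v s⟫ := by fun_prop
  have hJ := fun s => (hc.integral_hasStrictDerivAt 0 s).hasDerivAt
  have hd := hasDerivAt_expConv x hv
  have hmono := le_of_hasDerivAt_nonneg
    (F := fun t => 2 * (∫ s in (0:ℝ)..t, ⟪B (w s), v s⟫) - ⟪B (w t), w t⟫)
    (F' := fun s => 2 * (x * ⟪B (w s), w s⟫))
    (fun s => by
      refine (((hJ s).const_mul 2).sub
        ((B.hasFDerivAt.comp_hasDerivAt s (hd s)).inner ℝ (hd s))).congr_deriv ?_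
      simp only [Function.comp_apply, ← hw, map_sub, map_smul, inner_sub_left, inner_sub_right,
        inner_smul_left, inner_smul_right, hsym (v s), real_inner_comm (B (w s)) (v s),
        RCLike.conj_to_real]
      ring)
    (fun s _ => by have := hB (w s); positivity) ht
  have h0 : w 0 = 0 := expConv_zero x v
  simp only [intervalIntegral.integral_same, h0, map_zero, inner_zero_left] at hmono
  have := hB (w t)
  linarith

/-- The exponential-kernel form of `⟪D^γ u, u⟫ ≥ ½ D^γ ‖u‖²`, integrated in time. With
`w = expConv x v`, the quantity `E = ‖u 0‖² + 2x ∫ ⟪w, u⟫` dominates `‖u - w‖²`, and this makes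
`e^{xs} E(s)` nondecreasing. -/
theorem expConv_deriv_lower {u v : ℝ → H} (hv : Continuous v) (hu : ∀ s, HasDerivAt u (v s) s)
    {x : ℝ} (hx : 0 < x) {t : ℝ} (ht : 0 ≤ t) :
    0 ≤ (∫ s in (0:ℝ)..t, ⟪expConv x v s, u s⟫)
      + (‖u 0‖ ^ 2 / 2) * ∫ s in (0:ℝ)..t, Real.exp (-(x * s)) := by
  set w := expConv x v with hw
  have hwc : Continuous w := continuous_expConv x hv
  have huc : Continuous u := continuous_iff_continuousAt.2 fun s => (hu s).continuousAt
  have hc : Continuous fun s => ⟪w s, u s⟫ := by fun_prop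
  have hJ := fun s => (hc.integral_hasStrictDerivAt 0 s).hasDerivAt
  have hd := hasDerivAt_expConv x hv
  have h0 : w 0 = 0 := expConv_zero x v
  let E : ℝ → ℝ := fun s => ‖u 0‖ ^ 2 + 2 * x * ∫ r in (0:ℝ)..s, ⟪w r, u r⟫
  have hE : ∀ s, HasDerivAt E (2 * x * ⟪w s, u s⟫) s := fun s =>
    ((hJ s).const_mul (2 * x)).const_add _
  have hE1 : ∀ s, 0 ≤ s → ‖u s - w s‖ ^ 2 ≤ E s := by
    intro s hs
    have := le_of_hasDerivAt_nonneg (F := fun s => E s - ‖u s - w s‖ ^ 2)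
      (F' := fun s => 2 * x * ‖w s‖ ^ 2)
      (fun s => by
        refine ((hE s).sub ((hu s).sub (hd s)).norm_sq).congr_deriv ?_
        simp only [← hw, sub_sub_cancel, inner_sub_left, inner_smul_right,
          real_inner_self_eq_norm_sq, real_inner_comm (w s) (u s), Pi.sub_apply]
        ring)
      (fun s _ => by positivity) hs
    simp [E, h0] at this
    simpa [E] using this
  have hE2 := le_of_hasDerivAt_nonneg (F := fun s => Real.exp (x * s) * E s)
    (F' := fun s => Real.exp (x * s) * x * E s + Real.exp (x * s) * (2 * x * ⟪w s, u s⟫))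
    (fun s => by
      have h2 : HasDerivAt (fun s => Real.exp (x * s)) (Real.exp (x * s) * x) s := by
        simpa using ((hasDerivAt_id s).const_mul x).exp
      exact h2.mul (hE s))
    (fun s hs => by
      have h1 := hE1 s hs
      have h2 : ‖u s - w s‖ ^ 2 + 2 * ⟪w s, u s⟫ = ‖u s‖ ^ 2 + ‖w s‖ ^ 2 := by
        rw [norm_sub_sq_real, real_inner_comm (w s) (u s)]
        ring
      have h3 : 0 ≤ E s + 2 * ⟪w s, u s⟫ := by nlinarith [sq_nonneg ‖u s‖, sq_nonneg ‖w s‖]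
      have : 0 ≤ Real.exp (x * s) * x * (E s + 2 * ⟪w s, u s⟫) := by positivity
      linarith) ht
  have hexp : ∫ s in (0:ℝ)..t, Real.exp (-(x * s)) = (1 - Real.exp (-(x * t))) / x := by
    have hder : ∀ s ∈ uIcc 0 t, HasDerivAt (fun s => -(Real.exp (-(x * s)) / x))
        (Real.exp (-(x * s))) s := fun s _ => by
      have h3 : HasDerivAt (fun s => Real.exp (-(x * s))) (Real.exp (-(x * s)) * -x) s := by
        simpa using ((hasDerivAt_id s).const_mul x).neg.exp
      refine (h3.div_const x).neg.congr_deriv ?_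
      field_simp
    have hcont : Continuous fun s => Real.exp (-(x * s)) := by fun_prop
    rw [intervalIntegral.integral_eq_sub_of_hasDerivAt hder (hcont.intervalIntegrable _ _)]
    simp only [mul_zero, neg_zero, Real.exp_zero]
    ring
  rw [hexp]
  simp only [mul_zero, Real.exp_zero, one_mul, E, intervalIntegral.integral_same, add_zero] at hE2
  set J := ∫ s in (0:ℝ)..t, ⟪w s, u s⟫
  have hp : Real.exp (-(x * t)) * Real.exp (x * t) = 1 := by rw [← Real.exp_add]; simp
  have h5 := mul_le_mul_of_nonneg_left hE2 (Real.exp_pos (-(x * t))).le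
  rw [← mul_assoc, hp, one_mul] at h5
  have : J + ‖u 0‖ ^ 2 / 2 * ((1 - Real.exp (-(x * t))) / x)
      = (‖u 0‖ ^ 2 + 2 * x * J - Real.exp (-(x * t)) * ‖u 0‖ ^ 2) / (2 * x) := by
    field_simp
    ring
  rw [this]
  exact div_nonneg (by linarith) (by positivity)

/-! ### The a priori estimate -/

/-- The energy inequality: pairing the equation with `U` and integrating over `[0, t]`, the
`κ₂`, `κ₃` and `B` terms are nonnegative and the `κ₁` term costs only initial data. -/
theorem energy_le {γ δ α κ₁ κ₂ κ₃ : ℝ}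
    (hγ0 : 0 < γ) (hγ1 : γ < 1) (hδ0 : 0 < δ) (hδ1 : δ < 1) (hα0 : 0 < α) (hα1 : α < 1)
    (hκ₁ : 0 ≤ κ₁) (hκ₂ : 0 ≤ κ₂) (hκ₃ : 0 ≤ κ₃) (B : H →L[ℝ] H)
    (hsym : ∀ x y : H, ⟪B x, y⟫ = ⟪x, B y⟫) (hB : ∀ x : H, 0 ≤ ⟪B x, x⟫)
    {U v φ : ℝ → H} (hv : Continuous v) (hφ : Continuous φ) (hU : ∀ s, HasDerivAt U (v s) s)
    {t : ℝ} (ht : 0 ≤ t)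
    (heq : ∀ s ∈ Ioc (0:ℝ) t,
      v s + κ₁ • (∫ r in (0:ℝ)..s, om (1 - γ) (s - r) • v r)
        + κ₂ • U s + κ₃ • (∫ r in (0:ℝ)..s, om δ (s - r) • U r)
        + (∫ r in (0:ℝ)..s, om α (s - r) • B (U r)) = φ s) :
    ‖U t‖ ^ 2 ≤ ‖U 0‖ ^ 2 + κ₁ * (t ^ (1 - γ) / Real.Gamma (1 - γ + 1)) * ‖U 0‖ ^ 2
      + 2 * ∫ s in (0:ℝ)..t, ‖φ s‖ * ‖U s‖ := by
  have hUc : Continuous U := continuous_iff_continuousAt.2 fun s => (hU s).continuousAt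
  have hBU : Continuous fun s => B (U s) := by fun_prop
  have h1 : ∫ s in (0:ℝ)..t, ⟪v s, U s⟫ = ‖U t‖ ^ 2 / 2 - ‖U 0‖ ^ 2 / 2 := by
    have hc : Continuous fun s => ⟪v s, U s⟫ := by fun_prop
    refine intervalIntegral.integral_eq_sub_of_hasDerivAt (f := fun s => ‖U s‖ ^ 2 / 2)
      (fun s _ => ?_) (hc.intervalIntegrable _ _)
    refine ((hU s).norm_sq.div_const 2).congr_deriv ?_
    rw [real_inner_comm]
    ring
  have h2 := om_lower (ν := 1 - γ) (by linarith) (by linarith) ht hv hUc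
    fun x hx => expConv_deriv_lower hv hU hx ht
  rw [integral_om (by linarith)] at h2
  have h3 := om_lower hδ0 hδ1 ht hUc hUc (C := 0) fun x hx => by
    simpa using expConv_pos (ContinuousLinearMap.id ℝ H) (fun _ _ => rfl)
      (fun _ => real_inner_self_nonneg) hUc hx ht
  have h4 := om_lower hα0 hα1 ht hBU hUc (C := 0) fun x hx => by
    simpa using expConv_pos B hsym hB hUc hx ht
  rw [zero_mul, add_zero] at h3 h4
  have i1 := (conv_inner ht (intervalIntegrable_om (ν := 1 - γ) (by linarith) 0 t) hv hUc).1
  have i3 := (conv_inner ht (intervalIntegrable_om hδ0 0 t) hUc hUc).1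
  have i4 := (conv_inner ht (intervalIntegrable_om hα0 0 t) hBU hUc).1
  have i0 : IntervalIntegrable (fun s => ⟪v s, U s⟫) volume 0 t :=
    Continuous.intervalIntegrable (by fun_prop) _ _
  have i2 : IntervalIntegrable (fun s => ⟪U s, U s⟫) volume 0 t :=
    Continuous.intervalIntegrable (by fun_prop) _ _
  have h5 : 0 ≤ ∫ s in (0:ℝ)..t, ⟪U s, U s⟫ :=
    intervalIntegral.integral_nonneg ht fun s _ => real_inner_self_nonneg
  have hφU : ∫ s in (0:ℝ)..t, ⟪φ s, U s⟫ ≤ ∫ s in (0:ℝ)..t, ‖φ s‖ * ‖U s‖ :=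
    intervalIntegral.integral_mono_on ht (Continuous.intervalIntegrable (by fun_prop) _ _)
      (Continuous.intervalIntegrable (by fun_prop) _ _) fun s _ => real_inner_le_norm _ _
  have hsum : ∫ s in (0:ℝ)..t, ⟪φ s, U s⟫ = (∫ s in (0:ℝ)..t, ⟪v s, U s⟫)
      + κ₁ * (∫ s in (0:ℝ)..t, ⟪∫ r in (0:ℝ)..s, om (1 - γ) (s - r) • v r, U s⟫)
      + κ₂ * (∫ s in (0:ℝ)..t, ⟪U s, U s⟫)
      + κ₃ * (∫ s in (0:ℝ)..t, ⟪∫ r in (0:ℝ)..s, om δ (s - r) • U r, U s⟫)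
      + (∫ s in (0:ℝ)..t, ⟪∫ r in (0:ℝ)..s, om α (s - r) • B (U r), U s⟫) := by
    simp only [← intervalIntegral.integral_const_mul]
    rw [← intervalIntegral.integral_add i0 (i1.const_mul _),
      ← intervalIntegral.integral_add (i0.add (i1.const_mul _)) (i2.const_mul _),
      ← intervalIntegral.integral_add ((i0.add (i1.const_mul _)).add (i2.const_mul _))
        (i3.const_mul _),
      ← intervalIntegral.integral_add
        (((i0.add (i1.const_mul _)).add (i2.const_mul _)).add (i3.const_mul _)) i4]
    rw [intervalIntegral.integral_of_le ht, intervalIntegral.integral_of_le ht]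
    refine setIntegral_congr_fun measurableSet_Ioc fun s hs => ?_
    simp only [← heq s hs, inner_add_left, real_inner_smul_left]
  rw [h1] at hsum
  have j2 := mul_nonneg hκ₁ h2
  have j3 := mul_nonneg hκ₃ h3
  have j5 := mul_nonneg hκ₂ h5
  linarith

/-- The final estimate: integrate the energy inequality once more in time and absorb
`2t ∫ ‖φ‖ ‖U‖ ≤ ½ ∫ ‖U‖² + 2t² ∫ ‖φ‖²`. -/
theorem integral_norm_sq_le {γ δ α κ₁ κ₂ κ₃ : ℝ}
    (hγ0 : 0 < γ) (hγ1 : γ < 1) (hδ0 : 0 < δ) (hδ1 : δ < 1) (hα0 : 0 < α) (hα1 : α < 1)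
    (hκ₁ : 0 ≤ κ₁) (hκ₂ : 0 ≤ κ₂) (hκ₃ : 0 ≤ κ₃) (B : H →L[ℝ] H)
    (hsym : ∀ x y : H, ⟪B x, y⟫ = ⟪x, B y⟫) (hB : ∀ x : H, 0 ≤ ⟪B x, x⟫)
    {U v φ : ℝ → H} (hv : Continuous v) (hφ : Continuous φ) (hU : ∀ s, HasDerivAt U (v s) s)
    {t : ℝ} (ht : 0 ≤ t)
    (heq : ∀ s ∈ Ioc (0:ℝ) t,
      v s + κ₁ • (∫ r in (0:ℝ)..s, om (1 - γ) (s - r) • v r)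
        + κ₂ • U s + κ₃ • (∫ r in (0:ℝ)..s, om δ (s - r) • U r)
        + (∫ r in (0:ℝ)..s, om α (s - r) • B (U r)) = φ s) :
    (∫ s in (0:ℝ)..t, ‖U s‖ ^ 2)
      ≤ 2 * (t + κ₁ * t ^ (2 - γ) / Real.Gamma (3 - γ)) * ‖U 0‖ ^ 2
        + 4 * t ^ 2 * ∫ s in (0:ℝ)..t, ‖φ s‖ ^ 2 := by
  have hUc : Continuous U := continuous_iff_continuousAt.2 fun s => (hU s).continuousAt
  set N := ∫ s in (0:ℝ)..t, ‖φ s‖ * ‖U s‖ with hN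
  have hcN : Continuous fun s => ‖φ s‖ * ‖U s‖ := by fun_prop
  have hpt : ∀ τ ∈ Icc 0 t, ‖U τ‖ ^ 2
      ≤ (‖U 0‖ ^ 2 + 2 * N) + κ₁ * ‖U 0‖ ^ 2 * om (2 - γ) τ := by
    intro τ hτ
    have h1 := energy_le hγ0 hγ1 hδ0 hδ1 hα0 hα1 hκ₁ hκ₂ hκ₃ B hsym hB hv hφ hU hτ.1
      fun s hs => heq s ⟨hs.1, hs.2.trans hτ.2⟩
    have h2 : ∫ s in (0:ℝ)..τ, ‖φ s‖ * ‖U s‖ ≤ N :=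
      intervalIntegral.integral_mono_interval le_rfl hτ.1 hτ.2
        (Filter.Eventually.of_forall fun s => by positivity) (hcN.intervalIntegrable _ _)
    rw [om, show 2 - γ - 1 = 1 - γ by ring, show (2 - γ : ℝ) = 1 - γ + 1 by ring]
    linarith
  have hom := intervalIntegrable_om (ν := 2 - γ) (by linarith) 0 t
  have hint := intervalIntegral.integral_mono_on ht
    (Continuous.intervalIntegrable (by fun_prop) _ _)
    ((intervalIntegrable_const (c := ‖U 0‖ ^ 2 + 2 * N)).add (hom.const_mul _)) hpt
  rw [intervalIntegral.integral_add intervalIntegrable_const (hom.const_mul _),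
    intervalIntegral.integral_const, intervalIntegral.integral_const_mul,
    integral_om (by linarith), show (2 - γ + 1 : ℝ) = 3 - γ by ring] at hint
  simp only [sub_zero, smul_eq_mul] at hint
  have habs : 2 * t * N ≤ 1 / 2 * (∫ s in (0:ℝ)..t, ‖U s‖ ^ 2)
      + 2 * t ^ 2 * ∫ s in (0:ℝ)..t, ‖φ s‖ ^ 2 := by
    rw [hN, ← intervalIntegral.integral_const_mul, ← intervalIntegral.integral_const_mul,
      ← intervalIntegral.integral_const_mul, ← intervalIntegral.integral_add
        (Continuous.intervalIntegrable (by fun_prop) _ _)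
        (Continuous.intervalIntegrable (by fun_prop) _ _)]
    refine intervalIntegral.integral_mono_on ht
      (Continuous.intervalIntegrable (by fun_prop) _ _)
      (Continuous.intervalIntegrable (by fun_prop) _ _) fun s _ => ?_
    nlinarith [sq_nonneg (2 * t * ‖φ s‖ - ‖U s‖)]
  have : κ₁ * ‖U 0‖ ^ 2 * (t ^ (2 - γ) / Real.Gamma (3 - γ))
      = κ₁ * t ^ (2 - γ) / Real.Gamma (3 - γ) * ‖U 0‖ ^ 2 := by ring
  linarith

end Hilbert

/-- Intermediate a priori estimate for the transformed time-fractional mixed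
sub-diffusion and diffusion-wave problem. -/
theorem stmt_13 {H : Type*} [NormedAddCommGroup H] [InnerProductSpace ℝ H] [CompleteSpace H]
    (T γ δ α κ₁ κ₂ κ₃ κA : ℝ) (hT : 0 < T)
    (hγ0 : 0 < γ) (hγ1 : γ < 1) (hδ0 : 0 < δ) (hδ1 : δ < 1) (hα0 : 0 < α) (hα1 : α < 1)
    (hκ₁ : 0 ≤ κ₁) (hκ₂ : 0 ≤ κ₂) (hκ₃ : 0 ≤ κ₃) (hκA : 0 < κA)
    (A : H →ₗ[ℝ] H)
    (hsym : ∀ x y : H, ⟪A x, y⟫ = ⟪x, A y⟫)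
    (hcoer : ∀ x : H, κA * ‖x‖^2 ≤ ⟪A x, x⟫)
    (u u' f : ℝ → H)
    (hu : ∀ t ∈ Icc (0:ℝ) T, HasDerivAt u (u' t) t)
    (hu' : ContinuousOn u' (Icc 0 T))
    (hf : ContinuousOn f (Icc 0 T))
    (heq : ∀ t ∈ Ioc (0:ℝ) T,
      u' t + κ₁ • (∫ s in (0:ℝ)..t, om (1 - γ) (t - s) • u' s)
        + κ₂ • u t + κ₃ • (∫ s in (0:ℝ)..t, om δ (t - s) • u s)
        + (∫ s in (0:ℝ)..t, om α (t - s) • A (u s)) = f t)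
    (t : ℝ) (ht : t ∈ Icc (0:ℝ) T) :
    (∫ s in (0:ℝ)..t, ‖u s‖^2)
      ≤ 2 * (T + κ₁ * T ^ (2 - γ) / Real.Gamma (3 - γ)) * ‖u 0‖^2
        + 4 * T^2 * ∫ s in (0:ℝ)..t, ‖f s‖^2 := by
  let B : H →L[ℝ] H := ⟨A, LinearMap.IsSymmetric.continuous (𝕜 := ℝ) (T := A) hsym⟩
  have hB : ∀ x : H, 0 ≤ ⟪B x, x⟫ := fun x => le_trans (by positivity) (hcoer x)
  -- `u'`, `f` extend continuously to `ℝ`, and `u` extends to a primitive of the extended `u'`.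
  let v : ℝ → H := IccExtend hT.le ((Icc 0 T).domRestrict u')
  let φ : ℝ → H := IccExtend hT.le ((Icc 0 T).domRestrict f)
  let U : ℝ → H := fun s => u 0 + ∫ r in (0:ℝ)..s, v r
  have hv : Continuous v := hu'.domRestrict.Icc_extend'
  have hφ : Continuous φ := hf.domRestrict.Icc_extend'
  have hvE : ∀ s ∈ Icc 0 T, v s = u' s := fun s hs => IccExtend_of_mem hT.le _ hs
  have hφE : ∀ s ∈ Icc 0 T, φ s = f s := fun s hs => IccExtend_of_mem hT.le _ hs
  have hU : ∀ s, HasDerivAt U (v s) s := fun s =>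
    ((hv.integral_hasStrictDerivAt 0 s).hasDerivAt).const_add _
  have hUE : ∀ s ∈ Icc 0 T, U s = u s := by
    intro s hs
    have : ∫ r in (0:ℝ)..s, v r = u s - u 0 := by
      refine intervalIntegral.integral_eq_sub_of_hasDerivAt (fun r hr => ?_)
        (hv.intervalIntegrable _ _)
      rw [uIcc_of_le hs.1] at hr
      have hr' : r ∈ Icc 0 T := ⟨hr.1, hr.2.trans hs.2⟩
      rw [hvE r hr']
      exact hu r hr'
    simp only [U, this, add_sub_cancel]
  have hsub : ∀ s ∈ Icc 0 T, ∀ r ∈ uIcc 0 s, r ∈ Icc 0 T := fun s hs r hr => by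
    rw [uIcc_of_le hs.1] at hr
    exact ⟨hr.1, hr.2.trans hs.2⟩
  have h0 : (0:ℝ) ∈ Icc 0 T := ⟨le_rfl, hT.le⟩
  have key := integral_norm_sq_le hγ0 hγ1 hδ0 hδ1 hα0 hα1 hκ₁ hκ₂ hκ₃ B hsym hB hv hφ hU ht.1
    (by
      intro s hs
      have hs' : s ∈ Icc 0 T := ⟨hs.1.le, hs.2.trans ht.2⟩
      have h1 := heq s ⟨hs.1, hs.2.trans ht.2⟩
      have e1 : ∫ r in (0:ℝ)..s, om (1 - γ) (s - r) • v r
          = ∫ r in (0:ℝ)..s, om (1 - γ) (s - r) • u' r :=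
        intervalIntegral.integral_congr fun r hr => by simp only [hvE r (hsub s hs' r hr)]
      have e2 : ∫ r in (0:ℝ)..s, om δ (s - r) • U r = ∫ r in (0:ℝ)..s, om δ (s - r) • u r :=
        intervalIntegral.integral_congr fun r hr => by simp only [hUE r (hsub s hs' r hr)]
      have e3 : ∫ r in (0:ℝ)..s, om α (s - r) • B (U r)
          = ∫ r in (0:ℝ)..s, om α (s - r) • A (u r) :=
        intervalIntegral.integral_congr fun r hr => by
          simp only [hUE r (hsub s hs' r hr)]; rfl
      rw [e1, e2, e3, hvE s hs', hUE s hs', hφE s hs']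
      exact h1)
  have e4 : ∫ s in (0:ℝ)..t, ‖U s‖ ^ 2 = ∫ s in (0:ℝ)..t, ‖u s‖ ^ 2 :=
    intervalIntegral.integral_congr fun r hr => by simp only [hUE r (hsub t ht r hr)]
  have e5 : ∫ s in (0:ℝ)..t, ‖φ s‖ ^ 2 = ∫ s in (0:ℝ)..t, ‖f s‖ ^ 2 :=
    intervalIntegral.integral_congr fun r hr => by simp only [hφE r (hsub t ht r hr)]
  rw [e4, e5, hUE 0 h0] at key
  refine key.trans ?_
  have hΓ : 0 < Real.Gamma (3 - γ) := Real.Gamma_pos_of_pos (by linarith)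
  have hint : 0 ≤ ∫ s in (0:ℝ)..t, ‖f s‖ ^ 2 :=
    intervalIntegral.integral_nonneg ht.1 fun s _ => by positivity
  have hpow : t ^ (2 - γ) ≤ T ^ (2 - γ) := Real.rpow_le_rpow ht.1 ht.2 (by linarith)
  have ht0 := ht.1
  have htT := ht.2
  gcongr
end
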